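/- arXiv:2110.05051 — 2 statements merged into one kernel-verified Lean document; each statement's English description precedes it below -/
import Mathlib

section
/- Let α > -1, c > 0, let (μ_j)_{j≥0} be a real sequence, and let k ≥ 1. Assume the Hankel determinants D_{k−1} (with D_0 = 1), D_k and D_{k+1} are nonzero. For m ∈ {k, k+1} let x^{(m)} = M_m^{-1} e_m and y^{(m)} = R_m^{α,c} x^{(m)}. Then y_{k+1}^{(k+1)} ≠ 0 and D_{k−1} D_{k+1} / D_k² = ( √(k(α+k)) / c ) · ( y_k^{(k)} / y_{k+1}^{(k+1)} ). -/
open Matrix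

/-- The Hankel moment matrix `(M_m)_{ij} = μ_{i+j-2}` (1-based), i.e. `μ (i + j)` 0-based. -/
def hankelM (μ : ℕ → ℝ) (m : ℕ) : Matrix (Fin m) (Fin m) ℝ :=
  Matrix.of fun i j => μ ((i : ℕ) + (j : ℕ))

/-- The upper triangular matrix
`(R_m^{α,c})_{ij} = c^{−(α+1)/2} · c^{1−j} · ((j−1)!/(j−i)!) · Γ(α+j) / √(Γ(i)Γ(α+i))`
for `i ≤ j` (1-based indices), and `0` otherwise. -/
noncomputable def lagRc (α c : ℝ) (m : ℕ) : Matrix (Fin m) (Fin m) ℝ :=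
  Matrix.of fun i j =>
    if (i : ℕ) ≤ (j : ℕ) then
      c ^ (-(α + 1) / 2) * c ^ ((1 : ℝ) - (((j : ℕ) : ℝ) + 1)) *
        (((j : ℕ).factorial : ℝ) / (((j : ℕ) - (i : ℕ)).factorial : ℝ) *
          Real.Gamma (α + ((j : ℕ) : ℝ) + 1) /
          Real.sqrt (Real.Gamma (((i : ℕ) : ℝ) + 1) * Real.Gamma (α + ((i : ℕ) : ℝ) + 1)))
    else 0

/-- `y^{(m)} = R_m^{α,c} x^{(m)}`, where `x^{(m)} = M_m^{-1} e_m` and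
`e_m = (0,…,0,1)ᵀ ∈ ℝ^m`. -/
noncomputable def ySol (α c : ℝ) (μ : ℕ → ℝ) (m : ℕ) : Fin m → ℝ :=
  lagRc α c m *ᵥ
    ((hankelM μ m)⁻¹ *ᵥ fun i : Fin m => if (i : ℕ) = m - 1 then (1 : ℝ) else 0)

/-!
By the cofactor formula the last component of `x^{(m)} = M_m⁻¹ e_m` is `D_{m-1} / D_m`, and since
`R_m` is upper triangular the last component of `y^{(m)}` is this ratio times the last diagonal
entry of `R_m`. Hence `y_k^{(k)} / y_{k+1}^{(k+1)}` is `D_{k-1} D_{k+1} / D_k²` divided by the ratio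
of two consecutive diagonal entries of `R`, which the functional equation of `Γ` evaluates to
`√(k (α + k)) / c`.
-/

lemma blockTriangular_id_mulVec_apply_of_isTop {ι R : Type*} [Fintype ι] [PartialOrder ι]
    [NonUnitalNonAssocSemiring R] {A : Matrix ι ι R} (hA : A.BlockTriangular id) {i : ι}
    (hi : IsTop i) (v : ι → R) : (A *ᵥ v) i = A i i * v i := by
  refine Finset.sum_eq_single i (fun j _ hj => ?_) (fun h => absurd (Finset.mem_univ i) h)
  change A i j * v j = 0
  rw [hA ((hi j).lt_of_ne hj), zero_mul]

lemma inv_apply_last_last {K : Type*} [Field K] {n : ℕ}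
    (A : Matrix (Fin (n + 1)) (Fin (n + 1)) K) :
    A⁻¹ (Fin.last n) (Fin.last n) =
      (A.submatrix Fin.castSucc Fin.castSucc).det / A.det := by
  rw [inv_def, Matrix.smul_apply, adjugate_fin_succ_eq_det_submatrix, Fin.succAbove_last,
    Even.neg_one_pow (Even.add_self _), one_mul, Ring.inverse_eq_inv', smul_eq_mul,
    inv_mul_eq_div]

lemma hankelM_submatrix_castSucc (μ : ℕ → ℝ) (n : ℕ) :
    (hankelM μ (n + 1)).submatrix Fin.castSucc Fin.castSucc = hankelM μ n :=
  rfl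

section LagRc

variable (α c : ℝ)

lemma lagRc_blockTriangular (m : ℕ) : (lagRc α c m).BlockTriangular id :=
  fun _ _ hij => if_neg (not_le.mpr hij)

lemma lagRc_apply_self {m : ℕ} (i : Fin m) :
    lagRc α c m i i =
      c ^ (-(α + 1) / 2) * c ^ (-(i : ℝ)) * √((i : ℕ).factorial * Real.Gamma (α + i + 1)) := by
  simp only [lagRc, of_apply, le_refl, if_true, Nat.sub_self, Nat.factorial_zero, Nat.cast_one,
    div_one, Real.Gamma_nat_eq_factorial, Real.div_sqrt, sub_add_cancel_right]

variable {α c}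

lemma lagRc_apply_self_pos (hc : 0 < c) {m : ℕ} {i : Fin m} (hα : 0 < α + i + 1) :
    0 < lagRc α c m i i := by
  have : 0 < Real.Gamma (α + i + 1) := Real.Gamma_pos_of_pos hα
  rw [lagRc_apply_self]
  positivity

lemma sqrt_factorial_mul_Gamma_succ {n : ℕ} (hα : 0 < α + n + 1) :
    √((n + 1).factorial * Real.Gamma (α + (n + 1 : ℕ) + 1)) =
      √((n + 1 : ℕ) * (α + (n + 1 : ℕ))) * √(n.factorial * Real.Gamma (α + n + 1)) := by
  have hα' : 0 < α + (n + 1 : ℕ) := by simpa only [Nat.cast_succ, ← add_assoc] using hα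
  rw [← Real.sqrt_mul (by positivity), Real.Gamma_add_one hα'.ne', Nat.factorial_succ]
  push_cast
  ring_nf

lemma lagRc_succ_last (hc : c ≠ 0) {n : ℕ} (hα : 0 < α + n + 1) :
    lagRc α c (n + 2) (Fin.last (n + 1)) (Fin.last (n + 1)) =
      √((n + 1 : ℕ) * (α + (n + 1 : ℕ))) / c * lagRc α c (n + 1) (Fin.last n) (Fin.last n) := by
  have hpow : c ^ (-((n + 1 : ℕ) : ℝ)) = c ^ (-(n : ℝ)) / c := by
    rw [← Real.rpow_sub_one hc, Nat.cast_succ, neg_add']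
  simp only [lagRc_apply_self, Fin.val_last, sqrt_factorial_mul_Gamma_succ hα, hpow]
  ring

end LagRc

lemma ySol_last (α c : ℝ) (μ : ℕ → ℝ) (n : ℕ) :
    ySol α c μ (n + 1) (Fin.last n) =
      lagRc α c (n + 1) (Fin.last n) (Fin.last n) *
        ((hankelM μ n).det / (hankelM μ (n + 1)).det) := by
  have hsingle : (fun i : Fin (n + 1) => if (i : ℕ) = n + 1 - 1 then (1 : ℝ) else 0) =
      Pi.single (Fin.last n) 1 := by
    ext i
    simp [Pi.single_apply, Fin.ext_iff]
  rw [ySol, hsingle, mulVec_single_one,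
    blockTriangular_id_mulVec_apply_of_isTop (lagRc_blockTriangular α c _) Fin.le_last,
    col_apply, inv_apply_last_last, hankelM_submatrix_castSucc]

theorem beta_coefficient_preconditioned_general (α c : ℝ) (hc : 0 < c)
    (μ : ℕ → ℝ) (k : ℕ) (hk : 1 ≤ k) (hα : -(k : ℝ) < α)
    (hDk : (hankelM μ k).det ≠ 0)
    (hDk1 : (hankelM μ (k + 1)).det ≠ 0) :
    ySol α c μ (k + 1) (Fin.last k) ≠ 0 ∧
      (hankelM μ (k - 1)).det * (hankelM μ (k + 1)).det / ((hankelM μ k).det) ^ 2 =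
        (Real.sqrt ((k : ℝ) * (α + (k : ℝ))) / c) *
          (ySol α c μ k ⟨k - 1, Nat.sub_one_lt_of_lt hk⟩ / ySol α c μ (k + 1) (Fin.last k)) := by
  obtain ⟨n, rfl⟩ := Nat.exists_eq_add_of_le' hk
  have hα₀ : 0 < α + n + 1 := by
    push_cast at hα
    linarith
  have hα₁ : 0 < α + (Fin.last (n + 1) : ℕ) + 1 := by
    rw [Fin.val_last]
    push_cast
    linarith
  have hy₁ : ySol α c μ (n + 1 + 1) (Fin.last (n + 1)) ≠ 0 := by
    rw [ySol_last]
    exact mul_ne_zero (lagRc_apply_self_pos hc hα₁).ne' (div_ne_zero hDk hDk1)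
  have hy₀ : ySol α c μ (n + 1) ⟨n + 1 - 1, by omega⟩ = _ := ySol_last α c μ n
  refine ⟨hy₁, ?_⟩
  rw [← mul_div_assoc, eq_div_iff hy₁, hy₀, ySol_last, lagRc_succ_last hc.ne' hα₀,
    Nat.add_sub_cancel]
  field_simp

theorem beta_coefficient_preconditioned (α c : ℝ) (hα : -1 < α) (hc : 0 < c)
    (μ : ℕ → ℝ) (k : ℕ) (hk : 1 ≤ k)
    (h0 : (hankelM μ (k - 1)).det ≠ 0)
    (h1 : (hankelM μ k).det ≠ 0)
    (h2 : (hankelM μ (k + 1)).det ≠ 0) :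
    ySol α c μ (k + 1) (Fin.last k) ≠ 0 ∧
      (hankelM μ (k - 1)).det * (hankelM μ (k + 1)).det / ((hankelM μ k).det) ^ 2 =
        (Real.sqrt ((k : ℝ) * (α + (k : ℝ))) / c) *
          (ySol α c μ k ⟨k - 1, by omega⟩ / ySol α c μ (k + 1) (Fin.last k)) := by
  have hαk : -(k : ℝ) < α := by linarith [show (1 : ℝ) ≤ k from mod_cast hk]
  exact beta_coefficient_preconditioned_general α c hc μ k hk hαk h1 h2
end

section
/- Let α > -1, c > 0, let (μ_j)_{j≥0} be a real sequence, and let k ≥ 1. Assume the Hankel determinants D_k, D_{k+1} and D_{k+2} are nonzero. For m ∈ {k+1, k+2} let x^{(m)} = M_m^{-1} e_m and y^{(m)} = R_m^{α,c} x^{(m)}. Then y_{k+1}^{(k+1)} ≠ 0, y_{k+2}^{(k+2)} ≠ 0 and F_{k+1}/D_{k+1} − F_k/D_k = −( √((k+1)(α+k+1)) / c ) · ( y_{k+1}^{(k+2)} / y_{k+2}^{(k+2)} − √((k+1)(α+k+1)) ) + ( √(k(α+k)) / c ) · ( y_k^{(k+1)} / y_{k+1}^{(k+1)} − √(k(α+k))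 ). -/
open Matrix

/-- The matrix `N_m` with `(N_m)_{il} = μ_{i+l-2}` for `l ≤ m-1` and `(N_m)_{im} = μ_{i+m-1}`
(1-based indices). -/
def hankelN (μ : ℕ → ℝ) (m : ℕ) : Matrix (Fin m) (Fin m) ℝ :=
  Matrix.of fun i j => if (j : ℕ) < m - 1 then μ ((i : ℕ) + (j : ℕ)) else μ ((i : ℕ) + m)

/-!
Cramer's rule gives the last two entries of `x = x^{(m+1)}` as `D_m / D_{m+1}` and `-F_m / D_{m+1}`,
so `x_m / x_{m+1} = -F_m / D_m`. The last two rows of the upper triangular matrix `R` act on these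
two entries only, and with `s = √(m (α + m))` the recurrences of `R` along rows and columns give
`R_{m,m+1} = s R_{m+1,m+1}` and `s R_{m,m} = c R_{m+1,m+1}`. Hence
`(s / c) (y_m / y_{m+1} - s) = x_m / x_{m+1} = -F_m / D_m`, and the theorem is the difference of
this identity at `m = k` and at `m = k + 1`.
-/

section LinearAlgebra

variable {n : ℕ}

theorem inv_apply_eq_minor_div_det {K : Type*} [Field K] (A : Matrix (Fin (n + 1)) (Fin (n + 1)) K)
    (i j : Fin (n + 1)) :
    A⁻¹ i j = (-1) ^ (j + i : ℕ) * (A.submatrix j.succAbove i.succAbove).det / A.det := by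
  rw [inv_def, Ring.inverse_eq_inv', Matrix.smul_apply, adjugate_fin_succ_eq_det_submatrix,
    smul_eq_mul, inv_mul_eq_div]

variable {R : Type*} [NonUnitalNonAssocSemiring R]

theorem mulVec_last_of_isUpperTriangular {U : Matrix (Fin (n + 1)) (Fin (n + 1)) R}
    (hU : U.IsUpperTriangular) (v : Fin (n + 1) → R) :
    (U *ᵥ v) (Fin.last n) = U (Fin.last n) (Fin.last n) * v (Fin.last n) := by
  have below_diagonal (j : Fin n) : U (Fin.last n) j.castSucc = 0 := hU (Fin.castSucc_lt_last j)
  simp only [mulVec, dotProduct, Fin.sum_univ_castSucc, below_diagonal, zero_mul,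
    Finset.sum_const_zero, zero_add]

theorem mulVec_castSucc_last_of_isUpperTriangular {U : Matrix (Fin (n + 2)) (Fin (n + 2)) R}
    (hU : U.IsUpperTriangular) (v : Fin (n + 2) → R) :
    (U *ᵥ v) (Fin.last n).castSucc =
      U (Fin.last n).castSucc (Fin.last n).castSucc * v (Fin.last n).castSucc +
        U (Fin.last n).castSucc (Fin.last (n + 1)) * v (Fin.last (n + 1)) := by
  have below_diagonal (j : Fin n) : U (Fin.last n).castSucc j.castSucc.castSucc = 0 :=
    hU (Fin.castSucc_lt_castSucc_iff.mpr (Fin.castSucc_lt_last j))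
  simp only [mulVec, dotProduct, Fin.sum_univ_castSucc, below_diagonal, zero_mul,
    Finset.sum_const_zero, zero_add]

end LinearAlgebra

section Hankel

variable (μ : ℕ → ℝ) (n : ℕ)

theorem hankelM_submatrix_last_last :
    (hankelM μ (n + 1)).submatrix (Fin.last n).succAbove (Fin.last n).succAbove =
      hankelM μ n := by
  ext i j
  simp [hankelM]

theorem hankelM_submatrix_last_castSucc_last :
    (hankelM μ (n + 2)).submatrix (Fin.last (n + 1)).succAbove
      (Fin.last n).castSucc.succAbove = hankelN μ (n + 1) := by
  ext i j
  induction j using Fin.lastCases with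
  | last => simp [hankelM, hankelN]
  | cast j =>
    simp [hankelM, hankelN, Fin.succAbove_of_castSucc_lt _ _
      (Fin.castSucc_lt_castSucc_iff.mpr (Fin.castSucc_lt_last j))]

/-- The solution `x^{(m)} = M_m^{-1} e_m` of the Hankel system, written so that
`ySol α c μ m = lagRc α c m *ᵥ xSol μ m` holds definitionally. It is zero when `M_m` is singular. -/
noncomputable def xSol (m : ℕ) : Fin m → ℝ :=
  (hankelM μ m)⁻¹ *ᵥ fun i : Fin m => if (i : ℕ) = m - 1 then (1 : ℝ) else 0

theorem xSol_succ_apply (i : Fin (n + 1)) :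
    xSol μ (n + 1) i = (hankelM μ (n + 1))⁻¹ i (Fin.last n) := by
  have rhs_eq_single : (fun i : Fin (n + 1) => if (i : ℕ) = n + 1 - 1 then (1 : ℝ) else 0) =
      Pi.single (Fin.last n) 1 := by
    ext j
    simp [Pi.single_apply, Fin.ext_iff]
  rw [xSol, rhs_eq_single, mulVec_single_one, col_apply]

theorem xSol_last :
    xSol μ (n + 1) (Fin.last n) = (hankelM μ n).det / (hankelM μ (n + 1)).det := by
  rw [xSol_succ_apply, inv_apply_eq_minor_div_det, hankelM_submatrix_last_last,
    Even.neg_one_pow ⟨_, rfl⟩, one_mul]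

theorem xSol_castSucc_last :
    xSol μ (n + 2) (Fin.last n).castSucc =
      -(hankelN μ (n + 1)).det / (hankelM μ (n + 2)).det := by
  have sign_odd : Odd ((Fin.last (n + 1) : ℕ) + ((Fin.last n).castSucc : Fin (n + 2))) :=
    ⟨n, by simp only [Fin.val_last, Fin.val_castSucc]; omega⟩
  rw [xSol_succ_apply, inv_apply_eq_minor_div_det, hankelM_submatrix_last_castSucc_last,
    sign_odd.neg_one_pow, neg_one_mul]

variable {μ n}

theorem xSol_last_ne_zero (hn : (hankelM μ n).det ≠ 0) (hn' : (hankelM μ (n + 1)).det ≠ 0) :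
    xSol μ (n + 1) (Fin.last n) ≠ 0 := by
  rw [xSol_last]
  exact div_ne_zero hn hn'

theorem xSol_castSucc_last_div_last (hn : (hankelM μ (n + 2)).det ≠ 0) :
    xSol μ (n + 2) (Fin.last n).castSucc / xSol μ (n + 2) (Fin.last (n + 1)) =
      -((hankelN μ (n + 1)).det / (hankelM μ (n + 1)).det) := by
  rw [xSol_castSucc_last, xSol_last, div_div_div_cancel_right₀ hn, neg_div]

end Hankel

section LaguerreFactor

variable {α c : ℝ} {m : ℕ}

theorem lagRc_isUpperTriangular : (lagRc α c m).IsUpperTriangular :=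
  fun _ _ hji => if_neg (not_le.mpr hji)

theorem lagRc_apply_of_val_eq_add {i j : Fin m} {d : ℕ} (hj : (j : ℕ) = i + d) :
    lagRc α c m i j = c ^ (-(α + 1) / 2) * c ^ (-(j : ℝ)) * (((j : ℕ).factorial / d.factorial) *
      Real.Gamma (α + j + 1) / √(Real.Gamma (i + 1) * Real.Gamma (α + i + 1))) := by
  simp only [lagRc, of_apply, if_pos (show (i : ℕ) ≤ j by omega),
    show (j : ℕ) - i = d by omega, sub_add_cancel_right]

theorem lagRc_diag_pos (hc : 0 < c) (i : Fin m) (hi : 0 < α + i + 1) : 0 < lagRc α c m i i := by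
  rw [lagRc_apply_of_val_eq_add (add_zero _).symm]
  have := Real.Gamma_pos_of_pos hi
  have := Real.Gamma_pos_of_pos (Nat.cast_add_one_pos (α := ℝ) i)
  positivity

theorem sqrt_Gamma_mul_Gamma_add_one {a b : ℝ} (ha : 0 < a) (hb : 0 < b) :
    √(Real.Gamma (a + 1) * Real.Gamma (b + 1)) =
      √(a * b) * √(Real.Gamma a * Real.Gamma b) := by
  rw [Real.Gamma_add_one ha.ne', Real.Gamma_add_one hb.ne', mul_mul_mul_comm,
    Real.sqrt_mul (mul_pos ha hb).le]

theorem lagRc_row_succ {i i' : Fin m} (hi' : (i' : ℕ) = i + 1) (hi : 0 < α + i + 1)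
    (j : Fin m) :
    √(((i : ℝ) + 1) * (α + i + 1)) * lagRc α c m i' j = ((j : ℝ) - i) * lagRc α c m i j := by
  by_cases hij : i' ≤ j
  · obtain ⟨d, hd⟩ := Nat.exists_eq_add_of_le (Fin.le_def.mp hij)
    have hd_succ : (j : ℕ) = i + (d + 1) := by omega
    have hsub : (j : ℝ) - i = d + 1 := by
      rw [hd_succ]
      push_cast
      ring
    have hsqrt : √(Real.Gamma ((i' : ℕ) + 1) * Real.Gamma (α + (i' : ℕ) + 1)) =
        √(((i : ℝ) + 1) * (α + i + 1)) * √(Real.Gamma (i + 1) * Real.Gamma (α + i + 1)) := by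
      rw [hi', Nat.cast_succ, ← add_assoc,
        sqrt_Gamma_mul_Gamma_add_one (Nat.cast_add_one_pos (i : ℕ)) hi]
    have hs : √(((i : ℝ) + 1) * (α + i + 1)) ≠ 0 := by positivity
    rw [lagRc_apply_of_val_eq_add hd, lagRc_apply_of_val_eq_add hd_succ, hsub, hsqrt,
      Nat.factorial_succ]
    push_cast
    field_simp
  · rw [lagRc_isUpperTriangular (not_le.mp hij), mul_zero]
    rcases (show (j : ℕ) ≤ i by rw [Fin.le_def] at hij; omega).eq_or_lt with hji | hji
    · rw [hji, sub_self, zero_mul]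
    · rw [lagRc_isUpperTriangular hji, mul_zero]

theorem lagRc_col_succ (hc : c ≠ 0) {j j' : Fin m} (hj' : (j' : ℕ) = j + 1)
    (hj : α + j + 1 ≠ 0) {i : Fin m} (hij : i ≤ j) :
    c * ((j : ℝ) + 1 - i) * lagRc α c m i j' = ((j : ℝ) + 1) * (α + j + 1) * lagRc α c m i j := by
  obtain ⟨d, hd⟩ := Nat.exists_eq_add_of_le (Fin.le_def.mp hij)
  have hd_succ : (j' : ℕ) = i + (d + 1) := by omega
  have hsub : (j : ℝ) + 1 - i = d + 1 := by
    rw [hd]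
    push_cast
    ring
  have hΓ : Real.Gamma (α + (j' : ℕ) + 1) = (α + j + 1) * Real.Gamma (α + j + 1) := by
    rw [← Real.Gamma_add_one hj, hj', Nat.cast_succ, ← add_assoc]
  have hpow : c ^ (-((j' : ℕ) : ℝ)) = c ^ (-(j : ℝ)) / c := by
    rw [← Real.rpow_sub_one hc, hj', Nat.cast_succ, neg_add']
  rw [lagRc_apply_of_val_eq_add hd, lagRc_apply_of_val_eq_add hd_succ, hsub, hΓ, hpow, hj',
    Nat.factorial_succ, Nat.factorial_succ]
  push_cast
  field_simp

theorem lagRc_superdiag {i j : Fin m} (hj : (j : ℕ) = i + 1) (hi : 0 < α + i + 1) :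
    lagRc α c m i j = √(((i : ℝ) + 1) * (α + i + 1)) * lagRc α c m j j := by
  simp [lagRc_row_succ hj hi, hj]

theorem sqrt_mul_lagRc_diag (hc : c ≠ 0) {i j : Fin m} (hj : (j : ℕ) = i + 1)
    (hi : 0 < α + i + 1) :
    √(((i : ℝ) + 1) * (α + i + 1)) * lagRc α c m i i = c * lagRc α c m j j := by
  have hs : 0 < √(((i : ℝ) + 1) * (α + i + 1)) := by positivity
  have hs_sq : √(((i : ℝ) + 1) * (α + i + 1)) ^ 2 = ((i : ℝ) + 1) * (α + i + 1) :=
    Real.sq_sqrt (by positivity)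
  have hcol := lagRc_col_succ hc hj hi.ne' (le_refl i)
  rw [lagRc_superdiag hj hi] at hcol
  refine mul_left_cancel₀ hs.ne' ?_
  linear_combination lagRc α c m i i * hs_sq - hcol

end LaguerreFactor

section PreconditionedSolution

variable {α c : ℝ} {μ : ℕ → ℝ} {n : ℕ}

theorem ySol_last_ne_zero (hc : 0 < c) (hα : 0 < α + n + 1) (hn : (hankelM μ n).det ≠ 0)
    (hn' : (hankelM μ (n + 1)).det ≠ 0) : ySol α c μ (n + 1) (Fin.last n) ≠ 0 := by
  change (lagRc α c (n + 1) *ᵥ xSol μ (n + 1)) (Fin.last n) ≠ 0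
  rw [mulVec_last_of_isUpperTriangular lagRc_isUpperTriangular]
  exact mul_ne_zero (lagRc_diag_pos hc _ hα).ne' (xSol_last_ne_zero hn hn')

theorem sqrt_div_mul_ySol_div_sub_sqrt (hc : 0 < c) (hα : 0 < α + n + 1)
    (hn : (hankelM μ (n + 1)).det ≠ 0) (hn' : (hankelM μ (n + 2)).det ≠ 0) :
    √(((n : ℝ) + 1) * (α + n + 1)) / c *
        (ySol α c μ (n + 2) (Fin.last n).castSucc / ySol α c μ (n + 2) (Fin.last (n + 1)) -
          √(((n : ℝ) + 1) * (α + n + 1))) =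
      -((hankelN μ (n + 1)).det / (hankelM μ (n + 1)).det) := by
  have hx : xSol μ (n + 2) (Fin.last (n + 1)) ≠ 0 := xSol_last_ne_zero hn hn'
  have hR : lagRc α c (n + 2) (Fin.last (n + 1)) (Fin.last (n + 1)) ≠ 0 :=
    (lagRc_diag_pos hc _ (by push_cast [Fin.val_last]; linarith)).ne'
  have hdiag := sqrt_mul_lagRc_diag (α := α) (m := n + 2) hc.ne'
    (i := (Fin.last n).castSucc) (j := Fin.last (n + 1)) rfl hα
  have hsuper := lagRc_superdiag (α := α) (c := c) (m := n + 2)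
    (i := (Fin.last n).castSucc) (j := Fin.last (n + 1)) rfl hα
  simp only [Fin.val_castSucc, Fin.val_last] at hdiag hsuper
  change _ / c * ((lagRc α c (n + 2) *ᵥ xSol μ (n + 2)) _ /
    (lagRc α c (n + 2) *ᵥ xSol μ (n + 2)) _ - _) = _
  rw [← xSol_castSucc_last_div_last hn', mulVec_last_of_isUpperTriangular lagRc_isUpperTriangular,
    mulVec_castSucc_last_of_isUpperTriangular lagRc_isUpperTriangular, hsuper]
  field_simp
  linear_combination xSol μ (n + 2) (Fin.last n).castSucc * hdiag

end PreconditionedSolution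

-- For `α ≤ -1` some rows of `R` are junk (square roots of negative numbers, poles of `Γ`), but the
-- rows `k`, `k + 1`, `k + 2` that enter here are not.
theorem alpha_coefficient_preconditioned_general (α c : ℝ) (hc : 0 < c)
    (μ : ℕ → ℝ) (k : ℕ) (hk : 1 ≤ k) (hα : -(k : ℝ) < α)
    (h1 : (hankelM μ k).det ≠ 0)
    (h2 : (hankelM μ (k + 1)).det ≠ 0)
    (h3 : (hankelM μ (k + 2)).det ≠ 0) :
    ySol α c μ (k + 1) (Fin.last k) ≠ 0 ∧
    ySol α c μ (k + 2) (Fin.last (k + 1)) ≠ 0 ∧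
      (hankelN μ (k + 1)).det / (hankelM μ (k + 1)).det -
          (hankelN μ k).det / (hankelM μ k).det =
        -(√(((k : ℝ) + 1) * (α + (k : ℝ) + 1)) / c) *
            (ySol α c μ (k + 2) (Fin.last k).castSucc /
                ySol α c μ (k + 2) (Fin.last (k + 1)) -
              √(((k : ℝ) + 1) * (α + (k : ℝ) + 1))) +
          (√((k : ℝ) * (α + (k : ℝ))) / c) *
            (ySol α c μ (k + 1) ⟨k - 1, Nat.sub_lt_succ k 1⟩ /
                ySol α c μ (k + 1) (Fin.last k) -
              √((k : ℝ) * (α + (k : ℝ)))) := by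
  obtain ⟨n, rfl⟩ := Nat.exists_eq_add_of_le' hk
  push_cast at hα
  have hα_n : 0 < α + n + 1 := by linarith
  have hα_succ : 0 < α + (n + 1 : ℕ) + 1 := by push_cast; linarith
  have hα_succ_succ : 0 < α + (n + 2 : ℕ) + 1 := by push_cast; linarith
  refine ⟨ySol_last_ne_zero hc hα_succ h1 h2, ySol_last_ne_zero hc hα_succ_succ h2 h3, ?_⟩
  have ratio_n := sqrt_div_mul_ySol_div_sub_sqrt hc hα_n h1 h2
  have ratio_succ := sqrt_div_mul_ySol_div_sub_sqrt hc hα_succ h2 h3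
  have radicand : ((n + 1 : ℕ) : ℝ) * (α + (n + 1 : ℕ)) = ((n : ℝ) + 1) * (α + n + 1) := by
    push_cast
    ring
  rw [radicand]
  change _ = -(_ / c) * (ySol α c μ (n + 3) (Fin.last (n + 1)).castSucc / _ - _) +
    _ / c * (ySol α c μ (n + 2) (Fin.last n).castSucc / _ - _)
  linear_combination ratio_succ - ratio_n

theorem alpha_coefficient_preconditioned (α c : ℝ) (hα : -1 < α) (hc : 0 < c)
    (μ : ℕ → ℝ) (k : ℕ) (hk : 1 ≤ k)
    (h1 : (hankelM μ k).det ≠ 0)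
    (h2 : (hankelM μ (k + 1)).det ≠ 0)
    (h3 : (hankelM μ (k + 2)).det ≠ 0) :
    ySol α c μ (k + 1) (Fin.last k) ≠ 0 ∧
    ySol α c μ (k + 2) (Fin.last (k + 1)) ≠ 0 ∧
      (hankelN μ (k + 1)).det / (hankelM μ (k + 1)).det -
          (hankelN μ k).det / (hankelM μ k).det =
        -(Real.sqrt (((k : ℝ) + 1) * (α + (k : ℝ) + 1)) / c) *
            (ySol α c μ (k + 2) (⟨k, by omega⟩ : Fin (k + 2)) /
                ySol α c μ (k + 2) (Fin.last (k + 1)) -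
              Real.sqrt (((k : ℝ) + 1) * (α + (k : ℝ) + 1))) +
          (Real.sqrt ((k : ℝ) * (α + (k : ℝ))) / c) *
            (ySol α c μ (k + 1) (⟨k - 1, by omega⟩ : Fin (k + 1)) /
                ySol α c μ (k + 1) (Fin.last k) -
              Real.sqrt ((k : ℝ) * (α + (k : ℝ)))) := by
  have hα' : -(k : ℝ) < α := by linarith [show (1 : ℝ) ≤ k by exact_mod_cast hk]
  exact alpha_coefficient_preconditioned_general α c hc μ k hk hα' h1 h2 h3
end
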